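/- Every reduced Gröbner basis G of the ideal ⟨𝓕⟩ ⊆ Z2[X] with respect to the degree lexicographic order ≼_deg satisfies |G| ≥ 2^(2^n) and moreover |{p ∈ G : deg(p) ≥ 2^(2^n)}| ≥ 2^(2^n), where deg(p) denotes the maximal total degree of a monomial occurring in p. -/

import Mathlib

open MvPolynomial

/-- Monomials in the variables `σ`, represented by their exponent vectors. -/
abbrev Mon (σ : Type*) := σ →₀ ℕ

/-- A monomial order: a total order on monomials such that `1 ≼ t` for every monomial `t`
and `t ≼ u → t·v ≼ u·v` (written additively on exponent vectors). -/
structure MonOrd (σ : Type*) where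
  le : Mon σ → Mon σ → Prop
  le_refl : ∀ t, le t t
  le_trans : ∀ t u v, le t u → le u v → le t v
  le_antisymm : ∀ t u, le t u → le u t → t = u
  le_total : ∀ t u, le t u ∨ le u t
  zero_le : ∀ t, le 0 t
  add_le_add : ∀ t u v, le t u → le (t + v) (u + v)

/-- Strict version of a monomial order. -/
def MonOrd.lt {σ : Type*} (μ : MonOrd σ) (t u : Mon σ) : Prop := μ.le t u ∧ t ≠ u

/-- The extension of a monomial order (given by the relation `r` on monomials) to polynomials:
`g ≼ f` iff `g = f` or the greatest monomial on which `f` and `g` differ occurs in `f`.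
(This is the closed form of the recursive definition: `g ≼ f` iff `g = f`, or
`HT g ≺ HT f`, or `HT g = HT f` and `g - HT g ≼ f - HT f`, with `0` the least polynomial.) -/
def polyLe {σ : Type*} (r : Mon σ → Mon σ → Prop) (g f : MvPolynomial σ (ZMod 2)) : Prop :=
  g = f ∨ ∃ t, t ∈ f.support ∧ t ∉ g.support ∧
    ∀ u : Mon σ, ((u ∈ f.support ∧ u ∉ g.support) ∨ (u ∈ g.support ∧ u ∉ f.support)) → r u t

/-- Strict extension of a monomial order to polynomials. -/
def polyLt {σ : Type*} (r : Mon σ → Mon σ → Prop) (g f : MvPolynomial σ (ZMod 2)) : Prop :=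
  polyLe r g f ∧ g ≠ f

/-- `S_F`: the set of non-residual polynomials with respect to `F` and the monomial order `r`,
i.e. those `f` admitting a `g` with `f + g ∈ ⟨F⟩` and `g ≺ f`. -/
def SF {σ : Type*} (r : Mon σ → Mon σ → Prop) (F : Set (MvPolynomial σ (ZMod 2))) :
    Set (MvPolynomial σ (ZMod 2)) :=
  {f | ∃ g, f + g ∈ Ideal.span F ∧ polyLt r g f}

/-- `t` is the head monomial (`r`-greatest monomial) of the polynomial `f`. -/
def IsHT {σ : Type*} (r : Mon σ → Mon σ → Prop) (f : MvPolynomial σ (ZMod 2)) (t : Mon σ) :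
    Prop :=
  t ∈ f.support ∧ ∀ u ∈ f.support, r u t

/-- `HT(S)`: the set of head monomials (as polynomials) of the nonzero elements of `S`. -/
def HTset {σ : Type*} (r : Mon σ → Mon σ → Prop) (S : Set (MvPolynomial σ (ZMod 2))) :
    Set (MvPolynomial σ (ZMod 2)) :=
  {p | ∃ f ∈ S, f ≠ 0 ∧ ∃ t, IsHT r f t ∧ p = monomial t 1}

/-- The divisibility (componentwise) order `◁` on monomials. -/
def triMon {σ : Type*} (t u : Mon σ) : Prop := ∀ x, t x ≤ u x

/-- The order `◁` on polynomials: `p ◁ q` iff there is an injective map `φ` from the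
monomials of `p` to the monomials of `q` with `t ◁ φ t` for each monomial `t` of `p`. -/
def triPoly {σ : Type*} (p q : MvPolynomial σ (ZMod 2)) : Prop :=
  ∃ φ : Mon σ → Mon σ, Set.InjOn φ ↑p.support ∧ ∀ t ∈ p.support, φ t ∈ q.support ∧ triMon t (φ t)

/-- Upward closure with respect to `◁`. -/
def upClo {σ : Type*} (A : Set (MvPolynomial σ (ZMod 2))) : Set (MvPolynomial σ (ZMod 2)) :=
  {q | ∃ p ∈ A, triPoly p q}

/-- `Min_◁(A)`: the `◁`-minimal elements of `A`. -/
def minTri {σ : Type*} (A : Set (MvPolynomial σ (ZMod 2))) : Set (MvPolynomial σ (ZMod 2)) :=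
  {p | p ∈ A ∧ ∀ q ∈ A, triPoly q p → q = p}

/-- `G` is a Gröbner basis of the ideal `I` with respect to the monomial order `r`. -/
def IsGB {σ : Type*} (r : Mon σ → Mon σ → Prop) (G : Finset (MvPolynomial σ (ZMod 2)))
    (I : Ideal (MvPolynomial σ (ZMod 2))) : Prop :=
  (↑G : Set (MvPolynomial σ (ZMod 2))) ⊆ ↑I ∧
    Ideal.span (↑G : Set (MvPolynomial σ (ZMod 2))) = I ∧
    Ideal.span (HTset r (↑I : Set (MvPolynomial σ (ZMod 2)))) = Ideal.span (HTset r ↑G)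

/-- `G` is a reduced Gröbner basis of `I` with respect to `r`. -/
def IsReducedGB {σ : Type*} (r : Mon σ → Mon σ → Prop) (G : Finset (MvPolynomial σ (ZMod 2)))
    (I : Ideal (MvPolynomial σ (ZMod 2))) : Prop :=
  IsGB r G I ∧ ∀ f ∈ G, ¬ ∀ t ∈ f.support,
    (monomial t 1 : MvPolynomial σ (ZMod 2)) ∈
      Ideal.span (HTset r ((↑G : Set (MvPolynomial σ (ZMod 2))) \ {f}))

/-- The variable set `X`: the special variables `s, ℓ, c, c̄, b, b̄` together with, for each
`0 ≤ i ≤ n`, the variables `s_i, f_i, q_{ji}, c_{ji}, b_{ji}` (`1 ≤ j ≤ 4`, encoded by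
`j : Fin 4`) and their barred copies (`bar = true`). -/
inductive MVar (n : ℕ) : Type where
  | vs | vl | vc | vcb | vb | vbb
  | vS (bar : Bool) (i : Fin (n+1))
  | vF (bar : Bool) (i : Fin (n+1))
  | vQ (bar : Bool) (j : Fin 4) (i : Fin (n+1))
  | vC (bar : Bool) (j : Fin 4) (i : Fin (n+1))
  | vB (bar : Bool) (j : Fin 4) (i : Fin (n+1))
deriving DecidableEq

open MVar

abbrev MPoly (n : ℕ) := MvPolynomial (MVar n) (ZMod 2)

/-- `e(n) = 2^(2^n)`. -/
def en (n : ℕ) : ℕ := 2 ^ 2 ^ n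

/-- The set `P_0` (barred copy if `bar = true`). -/
def P0 (n : ℕ) (bar : Bool) : Set (MPoly n) :=
  {p | ∃ j : Fin 4, p =
    X (vB bar j 0) ^ 2 * X (vC bar j 0) * X (vF bar 0) + X (vC bar j 0) * X (vS bar 0)}

/-- The set `P_m` for `m = i+1`, `i : Fin n` (barred copy if `bar = true`).
Here `i.succ` plays the role of `m` and `i.castSucc` the role of `m-1`; the indices
`1,2,3,4` of the paper are encoded as `0,1,2,3 : Fin 4`. -/
def Pm (n : ℕ) (bar : Bool) (i : Fin n) : Set (MPoly n) :=
  ({ X (vQ bar 0 i.succ) * X (vC bar 0 i.castSucc) * X (vS bar i.castSucc) + X (vS bar i.succ),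
    X (vQ bar 1 i.succ) * X (vC bar 1 i.castSucc) * X (vS bar i.castSucc)
      + X (vQ bar 0 i.succ) * X (vB bar 0 i.castSucc) * X (vC bar 0 i.castSucc)
        * X (vF bar i.castSucc),
    X (vQ bar 2 i.succ) * X (vC bar 2 i.castSucc) * X (vF bar i.castSucc)
      + X (vQ bar 1 i.succ) * X (vC bar 1 i.castSucc) * X (vF bar i.castSucc),
    X (vQ bar 2 i.succ) * X (vB bar 0 i.castSucc) * X (vC bar 2 i.castSucc)
        * X (vS bar i.castSucc)
      + X (vQ bar 1 i.succ) * X (vB bar 3 i.castSucc) * X (vC bar 1 i.castSucc)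
        * X (vS bar i.castSucc),
    X (vQ bar 3 i.succ) * X (vB bar 3 i.castSucc) * X (vC bar 3 i.castSucc)
        * X (vF bar i.castSucc)
      + X (vQ bar 2 i.succ) * X (vC bar 2 i.castSucc) * X (vS bar i.castSucc),
    X (vQ bar 3 i.succ) * X (vC bar 3 i.castSucc) * X (vS bar i.castSucc)
      + X (vF bar i.succ) } : Set (MPoly n))
  ∪ {p | ∃ j : Fin 4, p =
      X (vQ bar 1 i.succ) * X (vB bar 2 i.castSucc) * X (vB bar j i.succ) * X (vC bar j i.succ)
          * X (vF bar i.castSucc)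
        + X (vQ bar 1 i.succ) * X (vB bar 1 i.castSucc) * X (vC bar j i.succ)
          * X (vF bar i.castSucc)}

/-- The set `P = P_0 ∪ P_1 ∪ ⋯ ∪ P_n`; for `bar = true` this is the barred copy `P̄`
(the image of `P` under the substitution replacing each variable by its barred version). -/
def PP (n : ℕ) (bar : Bool) : Set (MPoly n) := P0 n bar ∪ ⋃ i : Fin n, Pm n bar i

/-- The set `G` of seven extra binomials. -/
def GG (n : ℕ) : Set (MPoly n) :=
  { X (vB false 3 (Fin.last n)) * X vl * X vb + X vl * X vc,
    X (vB false 3 (Fin.last n)) * X vl * X vbb + X vl * X vcb,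
    X (vC false 3 (Fin.last n)) * X (vF false (Fin.last n)) + X vl,
    X (vC true 3 (Fin.last n)) * X (vF true (Fin.last n))
      + X (vC false 3 (Fin.last n)) * X (vS false (Fin.last n)),
    X (vB true 3 (Fin.last n)) * X (vC false 3 (Fin.last n)) * X (vS false (Fin.last n))
      + X (vC false 3 (Fin.last n)) * X (vS false (Fin.last n)) * X vb,
    X (vB true 3 (Fin.last n)) * X (vC false 3 (Fin.last n)) * X (vS false (Fin.last n))
      + X (vC false 3 (Fin.last n)) * X (vS false (Fin.last n)) * X vbb,
    X (vC true 3 (Fin.last n)) * X (vS true (Fin.last n)) + X vs }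

/-- The set `𝓕 = P ∪ P̄ ∪ G`. -/
def FF (n : ℕ) : Set (MPoly n) := PP n false ∪ PP n true ∪ GG n

/-- The set `C = {ℓ c̄^{m1} c^{m2} : m1 + m2 = e(n)}` of monomials. -/
def Cmon (n : ℕ) : Set (Mon (MVar n)) :=
  {α | ∃ m1 m2 : ℕ, m1 + m2 = en n ∧
    α = Finsupp.single vl 1 + Finsupp.single vcb m1 + Finsupp.single vc m2}

/-- The set `D = {ℓ^j c̄^{m1} c^{m2} : j ∈ {0,1}, j + m1 + m2 ≤ e(n)}` of monomials. -/
def Dmon (n : ℕ) : Set (Mon (MVar n)) :=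
  {α | ∃ j m1 m2 : ℕ, j ≤ 1 ∧ j + m1 + m2 ≤ en n ∧
    α = Finsupp.single vl j + Finsupp.single vcb m1 + Finsupp.single vc m2}

/-- An injective rank function on the variables realizing the variable ordering
(from least to greatest): `s, c, c̄, ℓ, b, b̄`; then `s_0,…,s_n`; `f_0,…,f_n`;
`c_{10},…,c_{1n}; …; c_{40},…,c_{4n}`; `b_{10},…,b_{4n}`; `q_{10},…,q_{4n}`;
then the barred variables in the same pattern. -/
def vrank (n : ℕ) : MVar n → ℕ
  | .vs => 0
  | .vc => 1
  | .vcb => 2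
  | .vl => 3
  | .vb => 4
  | .vbb => 5
  | .vS bar i => 6 + (cond bar (14 * (n+1)) 0) + (i : ℕ)
  | .vF bar i => 6 + (cond bar (14 * (n+1)) 0) + (n+1) + (i : ℕ)
  | .vC bar j i => 6 + (cond bar (14 * (n+1)) 0) + 2*(n+1) + (j : ℕ)*(n+1) + (i : ℕ)
  | .vB bar j i => 6 + (cond bar (14 * (n+1)) 0) + 6*(n+1) + (j : ℕ)*(n+1) + (i : ℕ)
  | .vQ bar j i => 6 + (cond bar (14 * (n+1)) 0) + 10*(n+1) + (j : ℕ)*(n+1) + (i : ℕ)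

/-- The lexicographic monomial order on `X`: `t ≼_lex u` iff `t = u` or the exponents differ
somewhere and at the greatest variable (w.r.t. `vrank`) where they differ, the exponent of
`t` is smaller. -/
def lexLe (n : ℕ) (t u : Mon (MVar n)) : Prop :=
  t = u ∨ ∃ x : MVar n, t x < u x ∧ ∀ y : MVar n, vrank n x < vrank n y → t y = u y

/-- The total degree of a monomial. -/
def mdeg {σ : Type*} (t : Mon σ) : ℕ := t.sum fun _ k => k

/-- The degree lexicographic monomial order. -/
def degLexLe (n : ℕ) (t u : Mon (MVar n)) : Prop :=
  mdeg t < mdeg u ∨ (mdeg t = mdeg u ∧ lexLe n t u)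

/-- Weighted degree of a monomial with respect to a weight map `w`. -/
noncomputable def wdeg {n : ℕ} (w : MVar n → ℝ) (t : Mon (MVar n)) : ℝ :=
  t.sum fun x k => (k : ℝ) * w x

/-- The weighted monomial order determined by the weight map `w`. -/
def wLe {n : ℕ} (w : MVar n → ℝ) (t u : Mon (MVar n)) : Prop := t = u ∨ wdeg w t < wdeg w u

/-!
A sum of monomial coefficients over a set closed under the rewriting `l ↔ r` of the generators
`l - r` vanishes on the binomial ideal `⟨𝓕⟩`. The generators are the transitions of a reversible
machine that counts to `e(n)` by repeated squaring, `e(m + 1) = e(m)²`, so that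
`ℓ c̄^a c^b ≡ s` modulo `⟨𝓕⟩` as soon as `a + b = e(n)`; then `ℓ c̄^a c^b` is a head monomial.
For `a + b < e(n)` the machine runs out of units and never reaches `s`: every other monomial
reachable from `ℓ c̄^a c^b` has larger degree, and therefore `ℓ c̄^a c^b` is not a head monomial.
Hence for `a + b = e(n)` no proper divisor of `ℓ c̄^a c^b` is a head monomial, and a Gröbner basis
contains an element with exactly this head, of degree `e(n) + 1`. There are `e(n) + 1` such pairs.
-/

section BinomialIdeal

variable {σ R : Type*} [CommRing R]

/-- A set `A` of monomials is saturated under a set `F` of binomials if every `f ∈ F` has the form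
`x^l - x^r` with `w + l ∈ A ↔ w + r ∈ A` for all `w`. Then `A` is a union of classes of the
congruence on monomials generated by `F`. -/
def IsSaturated (F : Set (MvPolynomial σ R)) (A : Set (Mon σ)) : Prop :=
  ∀ f ∈ F, ∃ l r : Mon σ, f = monomial l 1 - monomial r 1 ∧ ∀ w, w + l ∈ A ↔ w + r ∈ A

open Classical in
/-- The sum of the coefficients of a polynomial at the monomials of `A`. -/
noncomputable def coeffSum (A : Set (Mon σ)) : MvPolynomial σ R →ₗ[R] R :=
  (basisMonomials σ R).constr R (A.indicator 1)

lemma coeffSum_monomial (A : Set (Mon σ)) [DecidablePred (· ∈ A)] (t : Mon σ) (a : R) :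
    coeffSum A (monomial t a) = if t ∈ A then a else 0 := by
  have h : coeffSum A (basisMonomials σ R t) = A.indicator 1 t := Module.Basis.constr_basis ..
  rw [coe_basisMonomials] at h
  rw [← mul_one a, ← smul_eq_mul, ← smul_monomial, map_smul, h]
  simp [Set.indicator_apply]

lemma coeffSum_eq_sum (A : Set (Mon σ)) [DecidablePred (· ∈ A)] (p : MvPolynomial σ R) :
    coeffSum A p = ∑ t ∈ p.support with t ∈ A, p.coeff t := by
  conv_lhs => rw [p.as_sum]
  simp only [map_sum, coeffSum_monomial, Finset.sum_filter]

lemma IsSaturated.coeffSum_eq_zero {F : Set (MvPolynomial σ R)} {A : Set (Mon σ)}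
    (hA : IsSaturated F A) {p : MvPolynomial σ R} (hp : p ∈ Ideal.span F) : coeffSum A p = 0 := by
  classical
  induction hp using Submodule.closure_induction with
  | zero => exact map_zero _
  | add p q _ _ hp hq => rw [map_add, hp, hq, add_zero]
  | smul_mem q f hf =>
    obtain ⟨l, r, rfl, hlr⟩ := hA f hf
    induction q using MvPolynomial.induction_on' with
    | monomial w a =>
      simp only [smul_eq_mul, mul_sub, monomial_mul, mul_one, map_sub, coeffSum_monomial, hlr,
        sub_self]
    | add q₁ q₂ h₁ h₂ => rw [add_smul, map_add, h₁, h₂, add_zero]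

end BinomialIdeal

section HeadMonomial

variable {σ : Type*} {r : Mon σ → Mon σ → Prop}

lemma IsSaturated.not_isHT {F : Set (MvPolynomial σ (ZMod 2))} {A : Set (Mon σ)}
    (hA : IsSaturated F A) {t : Mon σ} (ht : t ∈ A) (h_min : ∀ u ∈ A, r u t → u = t)
    {p : MvPolynomial σ (ZMod 2)} (hp : p ∈ Ideal.span F) : ¬ IsHT r p t := by
  classical
  rintro ⟨htp, h_max⟩
  have h_filter : p.support.filter (· ∈ A) = {t} := by
    ext u
    simp only [Finset.mem_filter, Finset.mem_singleton]
    exact ⟨fun ⟨hu, huA⟩ => h_min u huA (h_max u hu), by rintro rfl; exact ⟨htp, ht⟩⟩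
  have h_zero := hA.coeffSum_eq_zero hp
  rw [coeffSum_eq_sum, h_filter, Finset.sum_singleton] at h_zero
  exact mem_support_iff.1 htp h_zero

lemma IsGB.exists_isHT_le {G : Finset (MvPolynomial σ (ZMod 2))}
    {I : Ideal (MvPolynomial σ (ZMod 2))} (hG : IsGB r G I) {f : MvPolynomial σ (ZMod 2)}
    {t : Mon σ} (hf : f ∈ I) (ht : IsHT r f t) : ∃ g ∈ G, ∃ u ≤ t, IsHT r g u := by
  have h_image : HTset r (G : Set (MvPolynomial σ (ZMod 2))) =
      (fun u => monomial u 1) '' {u | ∃ g ∈ G, g ≠ 0 ∧ IsHT r g u} := by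
    ext p
    constructor
    · rintro ⟨g, hg, hg0, u, hu, rfl⟩
      exact ⟨u, ⟨g, hg, hg0, hu⟩, rfl⟩
    · rintro ⟨u, ⟨g, hg, hg0, hu⟩, rfl⟩
      exact ⟨g, hg, hg0, u, hu, rfl⟩
  have hf0 : f ≠ 0 := support_nonempty.1 ⟨t, ht.1⟩
  have h_mem : monomial t 1 ∈ Ideal.span (HTset r (G : Set (MvPolynomial σ (ZMod 2)))) :=
    hG.2.2 ▸ Ideal.subset_span ⟨f, hf, hf0, t, ht, rfl⟩
  rw [h_image, mem_ideal_span_monomial_image] at h_mem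
  obtain ⟨u, ⟨g, hg, -, hu⟩, hut⟩ := h_mem t (by classical simp [mem_support_iff, coeff_monomial])
  exact ⟨g, hg, u, hut, hu⟩

end HeadMonomial

section RepeatedSquaring

lemma mul_pow_eq_mul_pow_of_mul_eq {M : Type*} [CommMonoid M] {u x y : M} (h : u * x = u * y)
    (k : ℕ) : u * x ^ k = u * y ^ k := by
  induction k with
  | zero => rw [pow_zero, pow_zero]
  | succ k ih => rw [pow_succ', pow_succ', ← mul_assoc, h, mul_right_comm, ih, mul_right_comm,
      mul_assoc]

variable {R : Type*} [CommRing R] {q c b : Fin 4 → R} {s f s' f' γ β : R}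

/-- The relations that `P_m` imposes on `q i = q_{im}`, `s = s_m`, `f = f_m`, the letters
`c i`, `b i`, `s'`, `f'` of level `m - 1`, and `γ = c_{jm}`, `β = b_{jm}` for one `j`. They describe
a program whose four phases are selected by the letters `q i`. -/
structure LevelRelations (q c b : Fin 4 → R) (s f s' f' γ β : R) : Prop where
  start : q 0 * c 0 * s' = s
  enter : q 1 * c 1 * s' = q 0 * b 0 * c 0 * f'
  turn : q 2 * c 2 * f' = q 1 * c 1 * f'
  repeat_loop : q 2 * b 0 * c 2 * s' = q 1 * b 3 * c 1 * s'
  leave : q 3 * b 3 * c 3 * f' = q 2 * c 2 * s'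
  finish : q 3 * c 3 * s' = f
  transfer : q 1 * b 2 * β * γ * f' = q 1 * b 1 * γ * f'

lemma LevelRelations.round_eq (h : LevelRelations q c b s f s' f' γ β) {k : ℕ}
    (h' : ∀ i, c i * s' = c i * f' * b i ^ k) :
    q 1 * c 1 * s' * γ = q 2 * c 2 * s' * γ * β ^ k := by
  have h_transfer : q 1 * γ * f' * b 1 ^ k = q 1 * γ * f' * (b 2 * β) ^ k :=
    mul_pow_eq_mul_pow_of_mul_eq (by linear_combination -h.transfer) k
  calc q 1 * c 1 * s' * γ
      = c 1 * (q 1 * γ * f' * b 1 ^ k) := by linear_combination q 1 * γ * h' 1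
    _ = q 1 * c 1 * f' * γ * (b 2 * β) ^ k := by rw [h_transfer]; ring
    _ = q 2 * γ * β ^ k * (c 2 * f' * b 2 ^ k) := by rw [← h.turn]; ring
    _ = q 2 * c 2 * s' * γ * β ^ k := by rw [← h' 2]; ring

-- Each unit of the counter `b 0` triggers a round that transfers `k + 1` letters `β`, whence the
-- square.
lemma LevelRelations.mul_eq_mul_pow (h : LevelRelations q c b s f s' f' γ β) {k : ℕ}
    (h' : ∀ i, c i * s' = c i * f' * b i ^ (k + 1)) :
    γ * s = γ * f * β ^ ((k + 1) * (k + 1)) := by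
  have h_round := h.round_eq h'
  have h_loop : q 1 * c 1 * s' * γ * b 0 ^ k = q 1 * c 1 * s' * γ * (b 3 * β ^ (k + 1)) ^ k :=
    mul_pow_eq_mul_pow_of_mul_eq
      (by linear_combination b 0 * h_round + γ * β ^ (k + 1) * h.repeat_loop) k
  calc γ * s
      = q 0 * γ * (c 0 * s') := by rw [← h.start]; ring
    _ = q 0 * b 0 * c 0 * f' * γ * b 0 ^ k := by rw [h' 0]; ring
    _ = q 2 * c 2 * s' * γ * β ^ (k + 1) * (b 3 * β ^ (k + 1)) ^ k := by
      rw [← h.enter, h_loop, h_round]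
    _ = q 3 * γ * β ^ ((k + 1) * (k + 1)) * (c 3 * f' * b 3 ^ (k + 1)) := by rw [← h.leave]; ring
    _ = γ * f * β ^ ((k + 1) * (k + 1)) := by rw [← h' 3, ← h.finish]; ring

end RepeatedSquaring

namespace CounterMachine

section Quotient

variable {n : ℕ}

lemma en_pos (k : ℕ) : 0 < en k := by
  unfold en
  positivity

lemma en_succ (k : ℕ) : en (k + 1) = en k * en k := by
  rw [en, en, pow_succ, pow_mul, sq]

lemma PP_subset_FF (bar : Bool) : PP n bar ⊆ FF n := by
  cases bar
  · exact fun p hp => Or.inl (Or.inl hp)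
  · exact fun p hp => Or.inl (Or.inr hp)

lemma P0_subset_FF (bar : Bool) : P0 n bar ⊆ FF n :=
  Set.subset_union_left.trans (PP_subset_FF bar)

lemma Pm_subset_FF (bar : Bool) (i : Fin n) : Pm n bar i ⊆ FF n :=
  (Set.subset_iUnion_of_subset i subset_rfl).trans
    (Set.subset_union_right.trans (PP_subset_FF bar))

lemma GG_subset_FF : GG n ⊆ FF n :=
  Set.subset_union_right

/-- The image of a variable in the quotient of the polynomial ring by `⟨𝓕⟩`. -/
noncomputable def residue (y : MVar n) : MPoly n ⧸ Ideal.span (FF n) :=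
  Ideal.Quotient.mk (Ideal.span (FF n)) (X y)

lemma mk_X (y : MVar n) : Ideal.Quotient.mk (Ideal.span (FF n)) (X y) = residue y := rfl

lemma mk_eq_mk_of_add_mem {p q : MPoly n} (h : p + q ∈ Ideal.span (FF n)) :
    Ideal.Quotient.mk (Ideal.span (FF n)) p = Ideal.Quotient.mk (Ideal.span (FF n)) q := by
  rwa [Ideal.Quotient.eq, CharTwo.sub_eq_add]

lemma levelRelations_residue (bar : Bool) (i : Fin n) (j : Fin 4) :
    LevelRelations (fun p => residue (vQ bar p i.succ)) (fun p => residue (vC bar p i.castSucc))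
      (fun p => residue (vB bar p i.castSucc)) (residue (vS bar i.succ)) (residue (vF bar i.succ))
      (residue (vS bar i.castSucc)) (residue (vF bar i.castSucc)) (residue (vC bar j i.succ))
      (residue (vB bar j i.succ)) := by
  have h_rel {p q : MPoly n} (h : p + q ∈ Pm n bar i) :=
    mk_eq_mk_of_add_mem (Ideal.subset_span (Pm_subset_FF bar i h))
  constructor <;> simp only [← mk_X, ← map_mul]
  · exact h_rel (by simp [Pm])
  · exact h_rel (by simp [Pm])
  · exact h_rel (by simp [Pm])
  · exact h_rel (by simp [Pm])
  · exact h_rel (by simp [Pm])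
  · exact h_rel (by simp [Pm])
  · exact h_rel (Or.inr ⟨j, rfl⟩)

lemma residue_vC_mul_vS (bar : Bool) (m : Fin (n + 1)) (j : Fin 4) :
    residue (vC bar j m) * residue (vS bar m) =
      residue (vC bar j m) * residue (vF bar m) * residue (vB bar j m) ^ en m := by
  induction m using Fin.induction generalizing j with
  | zero =>
    have h := mk_eq_mk_of_add_mem (Ideal.subset_span (P0_subset_FF (n := n) bar ⟨j, rfl⟩))
    simp only [map_mul, map_pow, mk_X] at h
    change _ = _ * residue (vB bar j 0) ^ 2
    rw [← h]
    ring
  | succ i ih =>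
    obtain ⟨k, hk⟩ := Nat.exists_eq_add_one.2 (en_pos i)
    rw [Fin.val_succ, en_succ, hk]
    simp only [Fin.val_castSucc, hk] at ih
    exact (levelRelations_residue bar i j).mul_eq_mul_pow ih

lemma mk_eq_mk_of_add_mem_GG {p q : MPoly n} (h : p + q ∈ GG n) :
    Ideal.Quotient.mk (Ideal.span (FF n)) p = Ideal.Quotient.mk (Ideal.span (FF n)) q :=
  mk_eq_mk_of_add_mem (Ideal.subset_span (GG_subset_FF h))

lemma residue_vl_mul_pow_mul_pow (a b : ℕ) :
    (residue vl : MPoly n ⧸ _) * residue vcb ^ a * residue vc ^ b =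
      residue vl * residue (vB false 3 (Fin.last n)) ^ (a + b) * residue vbb ^ a *
        residue vb ^ b := by
  have h_vb := mk_eq_mk_of_add_mem_GG (n := n) (Or.inl rfl)
  have h_vbb := mk_eq_mk_of_add_mem_GG (n := n) (Or.inr (Or.inl rfl))
  simp only [map_mul, mk_X] at h_vb h_vbb
  replace h_vb : residue vl * residue vc =
      residue vl * (residue (vB false 3 (Fin.last n)) * residue vb) := by
    linear_combination -h_vb
  replace h_vbb : residue vl * residue vcb =
      residue vl * (residue (vB false 3 (Fin.last n)) * residue vbb) := by
    linear_combination -h_vbb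
  rw [mul_pow_eq_mul_pow_of_mul_eq h_vbb, mul_right_comm, mul_pow_eq_mul_pow_of_mul_eq h_vb]
  ring

lemma residue_mul_pow_mul_pow (a b : ℕ) :
    residue (vC false 3 (Fin.last n)) * residue (vS false (Fin.last n)) * residue vbb ^ a *
        residue vb ^ b =
      residue (vC false 3 (Fin.last n)) * residue (vS false (Fin.last n)) *
        residue (vB true 3 (Fin.last n)) ^ (a + b) := by
  have h_vb := mk_eq_mk_of_add_mem_GG (n := n) (.inr (.inr (.inr (.inr (.inl rfl)))))
  have h_vbb := mk_eq_mk_of_add_mem_GG (n := n) (.inr (.inr (.inr (.inr (.inr (.inl rfl))))))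
  simp only [map_mul, mk_X] at h_vb h_vbb
  rw [mul_assoc, mul_comm] at h_vb h_vbb
  rw [mul_pow_eq_mul_pow_of_mul_eq h_vbb.symm, mul_right_comm,
    mul_pow_eq_mul_pow_of_mul_eq h_vb.symm]
  ring

lemma residue_vl_mul_pow_mul_pow_eq_vs {a b : ℕ} (hab : a + b = en n) :
    (residue vl : MPoly n ⧸ _) * residue vcb ^ a * residue vc ^ b = residue vs := by
  have h_vl := mk_eq_mk_of_add_mem_GG (n := n) (.inr (.inr (.inl rfl)))
  have h_bar := mk_eq_mk_of_add_mem_GG (n := n) (.inr (.inr (.inr (.inl rfl))))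
  have h_vs := mk_eq_mk_of_add_mem_GG (n := n) (.inr (.inr (.inr (.inr (.inr (.inr rfl))))))
  simp only [map_mul, mk_X] at h_vl h_bar h_vs
  have h_up := residue_vC_mul_vS false (Fin.last n) 3
  have h_down := residue_vC_mul_vS true (Fin.last n) 3
  rw [residue_vl_mul_pow_mul_pow, hab, ← h_vl]
  rw [Fin.val_last] at h_up h_down
  rw [← h_up, residue_mul_pow_mul_pow, hab, ← h_bar, ← h_down, h_vs]

/-- The monomial `ℓ^j c̄^a c^b`, the shape of the elements of `Cmon n` and `Dmon n`. -/
noncomputable def dmon (n j a b : ℕ) : Mon (MVar n) :=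
  Finsupp.single vl j + Finsupp.single vcb a + Finsupp.single vc b

lemma monomial_dmon (j a b : ℕ) :
    (monomial (dmon n j a b) 1 : MPoly n) = X vl ^ j * X vcb ^ a * X vc ^ b := by
  simp only [dmon, X_pow_eq_monomial, monomial_mul, mul_one]

lemma monomial_dmon_add_X_mem {a b : ℕ} (hab : a + b = en n) :
    monomial (dmon n 1 a b) 1 + X vs ∈ Ideal.span (FF n) := by
  rw [← CharTwo.sub_eq_add, ← Ideal.Quotient.eq, monomial_dmon, pow_one]
  simp only [map_mul, map_pow, mk_X]
  exact residue_vl_mul_pow_mul_pow_eq_vs hab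

end Quotient

section Configurations

/-- The monomial `t` involves no variable of `s`. -/
def VanishesOn {σ : Type*} (s : Set σ) (t : Mon σ) : Prop := ∀ y ∈ s, t y = 0

@[simp]
lemma vanishesOn_add {σ : Type*} {s : Set σ} {t u : Mon σ} :
    VanishesOn s (t + u) ↔ VanishesOn s t ∧ VanishesOn s u := by
  simp only [VanishesOn, Finsupp.add_apply, add_eq_zero, forall_and]

@[simp]
lemma vanishesOn_single {σ : Type*} {s : Set σ} {y : σ} :
    VanishesOn s (Finsupp.single y 1) ↔ y ∉ s := by
  refine ⟨fun h hy => by simpa using h y hy, fun hy z hz => ?_⟩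
  exact Finsupp.single_eq_of_ne (by rintro rfl; exact hy hz)

lemma add_single_one_eq_single_one {ι : Type*} [DecidableEq ι] {u : ι → ℕ} {i j : ι} :
    u + Pi.single i 1 = Pi.single j 1 ↔ u = 0 ∧ i = j := by
  refine ⟨fun h => ?_, by rintro ⟨rfl, rfl⟩; exact zero_add _⟩
  obtain rfl : i = j := by
    by_contra hij
    simpa [hij] using congrFun h i
  exact ⟨by simpa using h, rfl⟩

variable {n : ℕ}

/-- The exponents of `c_{1k}, …, c_{4k}`. -/
def selectors (t : Mon (MVar n)) (k : Fin (n + 1)) : Fin 4 → ℕ := fun j => t (vC false j k)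

/-- The exponents of `b_{1k}, …, b_{4k}`. -/
def counters (t : Mon (MVar n)) (k : Fin (n + 1)) : Fin 4 → ℕ := fun j => t (vB false j k)

/-- The exponents of `q_{1k}, …, q_{4k}`. -/
def program (t : Mon (MVar n)) (k : Fin (n + 1)) : Fin 4 → ℕ := fun j => t (vQ false j k)

/-- The degree of `t` in `s_k` and `f_k` together. -/
def control (t : Mon (MVar n)) (k : Fin (n + 1)) : ℕ := t (vS false k) + t (vF false k)

variable {t u : Mon (MVar n)} {k : Fin (n + 1)}

@[simp]
lemma selectors_add : selectors (t + u) k = selectors t k + selectors u k := rfl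

@[simp]
lemma counters_add : counters (t + u) k = counters t k + counters u k := rfl

@[simp]
lemma program_add : program (t + u) k = program t k + program u k := rfl

@[simp]
lemma control_add : control (t + u) k = control t k + control u k :=
  add_add_add_comm ..

@[simp]
lemma selectors_single (y : MVar n) : selectors (Finsupp.single y 1) k =
    match y with
    | vC false j i => if i = k then Pi.single j 1 else 0
    | _ => 0 := by
  ext j'
  cases y with
  | vC bar j i =>
    cases bar <;> simp [selectors, Finsupp.single_apply, Pi.single_apply, ite_apply, ← ite_and,
      and_comm, eq_comm]
  | _ => simp [selectors]

@[simp]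
lemma counters_single (y : MVar n) : counters (Finsupp.single y 1) k =
    match y with
    | vB false j i => if i = k then Pi.single j 1 else 0
    | _ => 0 := by
  ext j'
  cases y with
  | vB bar j i =>
    cases bar <;> simp [counters, Finsupp.single_apply, Pi.single_apply, ite_apply, ← ite_and,
      and_comm, eq_comm]
  | _ => simp [counters]

@[simp]
lemma program_single (y : MVar n) : program (Finsupp.single y 1) k =
    match y with
    | vQ false j i => if i = k then Pi.single j 1 else 0
    | _ => 0 := by
  ext j'
  cases y with
  | vQ bar j i =>
    cases bar <;> simp [program, Finsupp.single_apply, Pi.single_apply, ite_apply, ← ite_and,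
      and_comm, eq_comm]
  | _ => simp [program]

@[simp]
lemma control_single (y : MVar n) : control (Finsupp.single y 1) k =
    match y with
    | vS false i => if i = k then 1 else 0
    | vF false i => if i = k then 1 else 0
    | _ => 0 := by
  cases y with
  | vS bar i | vF bar i => cases bar <;> simp [control, Finsupp.single_apply]
  | _ => simp [control]

/-- No variable below level `k` and no instruction `q_{ji}` with `i ≤ k` occurs in `t`. -/
def Low (k : Fin (n + 1)) (t : Mon (MVar n)) : Prop :=
  (∀ i < k, control t i = 0 ∧ selectors t i = 0 ∧ counters t i = 0) ∧ ∀ i ≤ k, program t i = 0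

lemma low_add : Low k (t + u) ↔ Low k t ∧ Low k u := by
  simp only [Low, control_add, selectors_add, counters_add, program_add, add_eq_zero, forall_and]
  tauto

lemma low_single (y : MVar n) : Low k (Finsupp.single y 1) ↔
    match y with
    | vS false i | vF false i | vC false _ i | vB false _ i => k ≤ i
    | vQ false _ i => k < i
    | _ => True := by
  have h_le (i : Fin (n + 1)) : k ≤ i ↔ ∀ i' < k, i ≠ i' :=
    ⟨fun h i' hi' => by omega, fun h => not_lt.1 fun hi => h i hi rfl⟩
  have h_lt (i : Fin (n + 1)) : k < i ↔ ∀ i' ≤ k, i ≠ i' :=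
    ⟨fun h i' hi' => by omega, fun h => not_le.1 fun hi => h i hi rfl⟩
  cases y with
  | vS bar i | vF bar i | vC bar _ i | vB bar _ i | vQ bar _ i =>
    cases bar <;> simp [Low, h_le, h_lt]
  | _ => simp [Low]

lemma low_succ {k : Fin n} : Low k.succ t ↔ Low k.castSucc t ∧ control t k.castSucc = 0 ∧
    selectors t k.castSucc = 0 ∧ counters t k.castSucc = 0 ∧ program t k.succ = 0 := by
  have h_lt (i : Fin (n + 1)) : i < k.succ ↔ i < k.castSucc ∨ i = k.castSucc := by
    rw [← Fin.le_castSucc_iff, le_iff_lt_or_eq]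
  have h_le (i : Fin (n + 1)) : i ≤ k.succ ↔ i ≤ k.castSucc ∨ i = k.succ := by
    rw [le_iff_lt_or_eq, Fin.le_castSucc_iff]
  simp only [Low, h_lt, h_le, or_imp, forall_and, forall_eq]
  tauto

/-- In phase `p` of a program of `P_m`, the counters `a` of level `m - 1`, whose size is
`E = e(m-1)`, determine the number `v` of letters `b_{jm}` still owed to the counter `j` of
level `m`: each unit in the first counter stands for a round of `E` transfers, and each unit in the
second one for a single transfer of the current round. -/
def Phase (p : Fin 4) (E : ℕ) (a : Fin 4 → ℕ) (v : ℕ) : Prop :=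
  (if p = 0 ∨ p = 3 then a 1 = 0 ∧ a 2 = 0 ∧ a 0 + a 3 = E
    else a 1 + a 2 = E ∧ a 0 + a 3 + 1 = E) ∧ v = E * a 0 + a 1

/-- `Valid t k j a` says that the part of `t` up to level `k` is an admissible configuration of the
counter machine of level `k` with counter `j` selected. The vector `a` lists the exponents of
`b_{1k}, …, b_{4k}`, the `j`-th one increased by the number of letters `b_{jk}` that are owed to it
by the time the machine halts in `f_k`. -/
inductive Valid (t : Mon (MVar n)) : Fin (n + 1) → Fin 4 → (Fin 4 → ℕ) → Prop
  | boundary {k : Fin (n + 1)} {j : Fin 4} (h_sel : selectors t k = Pi.single j 1)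
      (h_ctrl : control t k = 1) (h_low : Low k t) :
      Valid t k j (counters t k + Pi.single j (t (vS false k) * en k))
  | running {k : Fin n} {j p : Fin 4} {a : Fin 4 → ℕ} {v : ℕ}
      (h_sel : selectors t k.succ = Pi.single j 1) (h_ctrl : control t k.succ = 0)
      (h_prog : program t k.succ = Pi.single p 1) (h_valid : Valid t k.castSucc p a)
      (h_phase : Phase p (en k) a v) :
      Valid t k.succ j (counters t k.succ + Pi.single j v)

lemma valid_iff_boundary {j : Fin 4} {a : Fin 4 → ℕ} (hk : 0 < control t k) :
    Valid t k j a ↔ selectors t k = Pi.single j 1 ∧ control t k = 1 ∧ Low k t ∧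
      a = counters t k + Pi.single j (t (vS false k) * en k) := by
  constructor
  · rintro (⟨h_sel, h_ctrl, h_low⟩ | ⟨-, h_ctrl, -⟩)
    · exact ⟨h_sel, h_ctrl, h_low, rfl⟩
    · omega
  · rintro ⟨h_sel, h_ctrl, h_low, rfl⟩
    exact .boundary h_sel h_ctrl h_low

lemma valid_succ_iff {k : Fin n} {j : Fin 4} {a : Fin 4 → ℕ} (hk : ¬ Low k.succ t) :
    Valid t k.succ j a ↔ selectors t k.succ = Pi.single j 1 ∧ control t k.succ = 0 ∧
      ∃ p b v, program t k.succ = Pi.single p 1 ∧ Valid t k.castSucc p b ∧ Phase p (en k) b v ∧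
        a = counters t k.succ + Pi.single j v := by
  constructor
  · generalize hi : k.succ = i at hk
    rintro (⟨-, -, h_low⟩ | ⟨h_sel, h_ctrl, h_prog, h_valid, h_phase⟩)
    · exact absurd h_low hk
    · obtain rfl := Fin.succ_injective _ hi
      exact ⟨h_sel, h_ctrl, _, _, _, h_prog, h_valid, h_phase, rfl⟩
  · rintro ⟨h_sel, h_ctrl, p, b, v, h_prog, h_valid, h_phase, rfl⟩
    exact .running h_sel h_ctrl h_prog h_valid h_phase

end Configurations

section Rules

variable {n : ℕ} {l r w : Mon (MVar n)}

/-- The unbarred variables of the levels up to `m`. -/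
def machine (m : Fin (n + 1)) : Set (MVar n) :=
  {y | ∃ i ≤ m, y = vS false i ∨ y = vF false i ∨
    ∃ j, y = vC false j i ∨ y = vB false j i ∨ y = vQ false j i}

/-- `l` is a monomial in the variables of the levels up to `m` that contains some `s_i` or `f_i`,
like all monomials occurring in `P_m`. -/
structure IsMachineWord (m : Fin (n + 1)) (l : Mon (MVar n)) : Prop where
  vanishesOn : VanishesOn (machine m)ᶜ l
  exists_control_pos : ∃ i ≤ m, 0 < control l i

/-- The replacement of `l` by `r` or conversely is a step of the machine of level `m`, in every
context. -/
structure IsRule (m : Fin (n + 1)) (l r : Mon (MVar n)) : Prop where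
  left : IsMachineWord m l
  right : IsMachineWord m r
  valid_iff : ∀ w j a, Valid (w + l) m j a ↔ Valid (w + r) m j a

lemma IsMachineWord.not_low {m k : Fin (n + 1)} (hl : IsMachineWord m l) (hmk : m < k) :
    ¬ Low k (w + l) := by
  obtain ⟨i, him, hi⟩ := hl.exists_control_pos
  intro h_low
  have := (h_low.1 i (him.trans_lt hmk)).1
  rw [control_add] at this
  omega

lemma IsMachineWord.eq_zero_of_lt {m k : Fin (n + 1)} (hl : IsMachineWord m l) (hmk : m < k) :
    selectors l k = 0 ∧ counters l k = 0 ∧ program l k = 0 ∧ control l k = 0 := by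
  have h_zero (y : MVar n) (hy : y ∉ machine m) : l y = 0 := hl.vanishesOn y hy
  refine ⟨funext fun j => h_zero _ ?_, funext fun j => h_zero _ ?_, funext fun j => h_zero _ ?_,
    add_eq_zero.2 ⟨h_zero _ ?_, h_zero _ ?_⟩⟩ <;> simpa [machine] using hmk

lemma IsRule.valid_iff_of_le {m k : Fin (n + 1)} (h : IsRule m l r) (hmk : m ≤ k) {j : Fin 4}
    {a : Fin 4 → ℕ} : Valid (w + l) k j a ↔ Valid (w + r) k j a := by
  induction k using Fin.induction generalizing j a with
  | zero =>
    obtain rfl := Fin.le_zero_iff.1 hmk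
    exact h.valid_iff w j a
  | succ k ih =>
    obtain rfl | hmk := hmk.eq_or_lt
    · exact h.valid_iff w j a
    · rw [valid_succ_iff (h.left.not_low hmk), valid_succ_iff (h.right.not_low hmk)]
      obtain ⟨hl_sel, hl_cnt, hl_prog, hl_ctrl⟩ := h.left.eq_zero_of_lt hmk
      obtain ⟨hr_sel, hr_cnt, hr_prog, hr_ctrl⟩ := h.right.eq_zero_of_lt hmk
      simp only [selectors_add, counters_add, program_add, control_add, hl_sel, hl_cnt, hl_prog,
        hl_ctrl, hr_sel, hr_cnt, hr_prog, hr_ctrl, ih (Fin.le_castSucc_iff.2 hmk)]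

/-- A monomial containing the instruction letter `q_{p,k+1}` and one of `s_k`, `f_k`, which starts
or ends a run of the machine of level `k`. -/
structure IsInstruction (k : Fin n) (p : Fin 4) (l : Mon (MVar n)) : Prop where
  program_eq : program l k.succ = Pi.single p 1
  control_eq : control l k.castSucc = 1
  control_succ : control l k.succ = 0
  low : Low k.castSucc l

lemma IsInstruction.valid_add_iff {k : Fin n} {p j : Fin 4} {a : Fin 4 → ℕ}
    (hl : IsInstruction k p l) :
    Valid (w + l) k.succ j a ↔ program w k.succ = 0 ∧ control w k.castSucc = 0 ∧
      control w k.succ = 0 ∧ Low k.castSucc w ∧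
      selectors (w + l) k.castSucc = Pi.single p 1 ∧ selectors (w + l) k.succ = Pi.single j 1 ∧
      ∃ v, Phase p (en k) (counters (w + l) k.castSucc +
        Pi.single p (l (vS false k.castSucc) * en k)) v ∧
      a = counters (w + l) k.succ + Pi.single j v := by
  have h_not_low : ¬ Low k.succ (w + l) := fun h => by
    simpa [hl.control_eq] using (low_succ.1 h).2.1
  have h_ctrl : 0 < control (w + l) k.castSucc := by simp [hl.control_eq]
  rw [valid_succ_iff h_not_low]
  simp only [valid_iff_boundary h_ctrl, program_add, control_add, hl.program_eq, hl.control_eq,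
    hl.control_succ, add_single_one_eq_single_one, low_add, hl.low]
  constructor
  · rintro ⟨h_sel, h_ctrl', p', b, v, ⟨h_prog, rfl⟩, ⟨h_sel', h_ctrl, h_low, rfl⟩, h_phase, rfl⟩
    have : w (vS false k.castSucc) = 0 := by unfold control at h_ctrl; omega
    rw [Finsupp.add_apply, this, zero_add] at h_phase
    exact ⟨h_prog, by omega, h_ctrl', h_low.1, h_sel', h_sel, v, h_phase, rfl⟩
  · rintro ⟨h_prog, h_ctrl, h_ctrl', h_low, h_sel', h_sel, v, h_phase, rfl⟩
    have : w (vS false k.castSucc) = 0 := by unfold control at h_ctrl; omega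
    refine ⟨h_sel, h_ctrl', p, _, v, ⟨h_prog, rfl⟩,
      ⟨h_sel', by omega, ⟨h_low, trivial⟩, rfl⟩, ?_, rfl⟩
    rwa [Finsupp.add_apply, this, zero_add]

/-- An instruction whose selector letter agrees with its instruction letter; the vector `δ` is its
contribution to the counters of level `k`. -/
structure IsCall (k : Fin n) (p : Fin 4) (δ : Fin 4 → ℕ) (l : Mon (MVar n)) : Prop
    extends IsMachineWord k.succ l, IsInstruction k p l where
  selectors_eq : selectors l k.castSucc = Pi.single p 1
  selectors_succ : selectors l k.succ = 0
  counters_succ : counters l k.succ = 0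
  load_eq : counters l k.castSucc + Pi.single p (l (vS false k.castSucc) * en k) = δ

/-- The monomial `q_{p,k+1} c_{pk} y`, for `y` one of `s_k` and `f_k`. -/
noncomputable def call (k : Fin n) (p : Fin 4) (y : MVar n) : Mon (MVar n) :=
  .single (vQ false p k.succ) 1 + .single (vC false p k.castSucc) 1 + .single y 1

variable {k : Fin n} {p p' : Fin 4} {δ δ' : Fin 4 → ℕ}

lemma IsCall.valid_add_iff (hl : IsCall k p δ l) {j : Fin 4} {a : Fin 4 → ℕ} :
    Valid (w + l) k.succ j a ↔ Low k.castSucc w ∧ control w k.castSucc = 0 ∧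
      selectors w k.castSucc = 0 ∧ program w k.succ = 0 ∧ control w k.succ = 0 ∧
      selectors w k.succ = Pi.single j 1 ∧
      ∃ v, Phase p (en k) (counters w k.castSucc + δ) v ∧
        a = counters w k.succ + Pi.single j v := by
  simp only [hl.toIsInstruction.valid_add_iff, selectors_add, counters_add, hl.selectors_eq,
    hl.selectors_succ, hl.counters_succ, add_single_one_eq_single_one, add_zero, and_true,
    add_assoc, hl.load_eq]
  tauto

lemma IsCall.isRule (hl : IsCall k p δ l) (hr : IsCall k p' δ' r)
    (h_phase : ∀ b v, Phase p (en k) (b + δ) v ↔ Phase p' (en k) (b + δ') v) :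
    IsRule k.succ l r where
  left := hl.toIsMachineWord
  right := hr.toIsMachineWord
  valid_iff w j a := by simp only [hl.valid_add_iff, hr.valid_add_iff, h_phase]

lemma isCall_call {y : MVar n} (k : Fin n) (p : Fin 4)
    (hy : y = vS false k.castSucc ∨ y = vF false k.castSucc) :
    IsCall k p (Pi.single p ((Finsupp.single y 1 : Mon (MVar n)) (vS false k.castSucc) * en k))
      (call k p y) := by
  have h_le := Fin.castSucc_lt_succ (i := k) |>.le
  have h_ne := Fin.castSucc_lt_succ (i := k) |>.ne
  rcases hy with rfl | rfl <;> exact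
    { vanishesOn := by simp [call, machine, h_le]
      exists_control_pos := ⟨k.castSucc, h_le, by simp [call]⟩
      program_eq := by simp [call]
      control_eq := by simp [call]
      control_succ := by simp [call, h_ne]
      low := by simp [call, low_add, low_single]
      selectors_eq := by simp [call]
      selectors_succ := by simp [call, h_ne]
      counters_succ := by simp [call]
      load_eq := by simp [call] }

lemma isCall_start (k : Fin n) (p : Fin 4) :
    IsCall k p (Pi.single p (en k)) (call k p (vS false k.castSucc)) := by
  simpa using isCall_call k p (.inl rfl)

lemma isCall_finish (k : Fin n) (p : Fin 4) :
    IsCall k p 0 (call k p (vF false k.castSucc)) := by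
  simpa using isCall_call k p (.inr rfl)

lemma IsCall.add_counter (hl : IsCall k p δ l) (i : Fin 4) :
    IsCall k p (Pi.single i 1 + δ) (.single (vB false i k.castSucc) 1 + l) where
  vanishesOn :=
    vanishesOn_add.2 ⟨by simp [machine, Fin.castSucc_lt_succ.le], hl.vanishesOn⟩
  exists_control_pos := by simpa using hl.exists_control_pos
  program_eq := by simp [hl.program_eq]
  control_eq := by simp [hl.control_eq]
  control_succ := by simp [hl.control_succ]
  low := by simp [low_add, low_single, hl.low]
  selectors_eq := by simp [hl.selectors_eq]
  selectors_succ := by simp [hl.selectors_succ]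
  counters_succ := by simp [hl.counters_succ, Fin.castSucc_lt_succ.ne]
  load_eq := by simp [add_assoc, hl.load_eq]

lemma isRule_enter (k : Fin n) : IsRule k.succ (call k 1 (vS false k.castSucc))
    (.single (vB false 0 k.castSucc) 1 + call k 0 (vF false k.castSucc)) :=
  (isCall_start k 1).isRule ((isCall_finish k 0).add_counter 0) fun b v => by
    simp only [Phase, Fin.isValue, one_ne_zero, Fin.reduceEq, or_self, ↓reduceIte, Pi.add_apply,
      Pi.single_eq_same, ne_eq, not_false_eq_true, Pi.single_eq_of_ne, add_zero, zero_ne_one,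
      or_false, mul_add, mul_one]
    omega

lemma isRule_turn (k : Fin n) : IsRule k.succ (call k 2 (vF false k.castSucc))
    (call k 1 (vF false k.castSucc)) :=
  (isCall_finish k 2).isRule (isCall_finish k 1) fun b v => by
    simp [Phase]

lemma isRule_loop (k : Fin n) : IsRule k.succ
    (.single (vB false 0 k.castSucc) 1 + call k 2 (vS false k.castSucc))
    (.single (vB false 3 k.castSucc) 1 + call k 1 (vS false k.castSucc)) :=
  ((isCall_start k 2).add_counter 0).isRule ((isCall_start k 1).add_counter 3) fun b v => by
    simp only [Phase, Fin.isValue, Fin.reduceEq, or_self, ↓reduceIte, Pi.add_apply, ne_eq,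
      one_ne_zero, not_false_eq_true, Pi.single_eq_of_ne, add_zero, Pi.single_eq_same, zero_add,
      mul_add, mul_one, zero_ne_one]
    omega

lemma isRule_leave (k : Fin n) : IsRule k.succ
    (.single (vB false 3 k.castSucc) 1 + call k 3 (vF false k.castSucc))
    (call k 2 (vS false k.castSucc)) :=
  ((isCall_finish k 3).add_counter 3).isRule (isCall_start k 2) fun b v => by
    simp only [Phase, Fin.isValue, Fin.reduceEq, or_true, ↓reduceIte, add_zero, Pi.add_apply, ne_eq,
      not_false_eq_true, Pi.single_eq_of_ne, Pi.single_eq_same, or_self, and_congr_left_iff]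
    omega

lemma valid_add_control_iff {y : MVar n} {k : Fin (n + 1)} {j : Fin 4} {a : Fin 4 → ℕ}
    (hy : y = vS false k ∨ y = vF false k) :
    Valid (w + .single y 1) k j a ↔ selectors w k = Pi.single j 1 ∧ control w k = 0 ∧ Low k w ∧
      a = counters w k + Pi.single j ((Finsupp.single y 1 : Mon (MVar n)) (vS false k) * en k) := by
  have h_ctrl : control (.single y 1 : Mon (MVar n)) k = 1 := by
    rcases hy with rfl | rfl <;> simp
  have h_low : Low k (.single y 1 : Mon (MVar n)) := by
    rcases hy with rfl | rfl <;> simp [low_single]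
  have h_rest : selectors (.single y 1 : Mon (MVar n)) k = 0 ∧
      counters (.single y 1 : Mon (MVar n)) k = 0 := by
    rcases hy with rfl | rfl <;> simp
  rw [valid_iff_boundary (by simp [h_ctrl])]
  simp only [selectors_add, counters_add, control_add, low_add, h_ctrl, h_low, h_rest, add_zero,
    and_true, add_eq_right]
  refine and_congr_right fun _ => and_congr_right fun hw => and_congr_right fun _ => ?_
  rw [Finsupp.add_apply, (add_eq_zero.1 hw).1, zero_add]

lemma IsCall.isRule_control {y : MVar n} (hy : y = vS false k.succ ∨ y = vF false k.succ)
    (hl : IsCall k p δ l)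
    (h_phase : ∀ b v, Phase p (en k) (b + δ) v ↔
      b = 0 ∧ v = (Finsupp.single y 1 : Mon (MVar n)) (vS false k.succ) * en k.succ) :
    IsRule k.succ l (.single y 1) where
  left := hl.toIsMachineWord
  right := by
    rcases hy with rfl | rfl
    · exact ⟨by simp [machine], k.succ, le_rfl, by simp⟩
    · exact ⟨by simp [machine], k.succ, le_rfl, by simp⟩
  valid_iff w j a := by
    rw [hl.valid_add_iff, valid_add_control_iff hy, low_succ]
    simp only [h_phase]
    constructor
    · rintro ⟨h₁, h₂, h₃, h₄, h₅, h₆, v, ⟨h₇, rfl⟩, rfl⟩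
      exact ⟨h₆, h₅, ⟨h₁, h₂, h₃, h₇, h₄⟩, rfl⟩
    · rintro ⟨h₆, h₅, ⟨h₁, h₂, h₃, h₇, h₄⟩, rfl⟩
      exact ⟨h₁, h₂, h₃, h₄, h₅, h₆, _, ⟨h₇, rfl⟩, rfl⟩

lemma phase_start_iff {E : ℕ} {b : Fin 4 → ℕ} {v : ℕ} :
    Phase 0 E (b + Pi.single 0 E) v ↔ b = 0 ∧ v = E * E := by
  have h_zero : b = 0 ↔ b 0 = 0 ∧ b 1 = 0 ∧ b 2 = 0 ∧ b 3 = 0 := by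
    simp [funext_iff, Fin.forall_fin_succ]
  simp only [Phase, Fin.isValue, Fin.reduceEq, or_false, ↓reduceIte, Pi.add_apply, ne_eq,
    one_ne_zero, not_false_eq_true, Pi.single_eq_of_ne, add_zero, Pi.single_eq_same, h_zero]
  constructor
  · rintro ⟨⟨h₁, h₂, h₃⟩, rfl⟩
    grind
  · grind

lemma phase_finish_iff {E : ℕ} {b : Fin 4 → ℕ} {v : ℕ} :
    Phase 3 E (b + Pi.single 3 E) v ↔ b = 0 ∧ v = 0 := by
  have h_zero : b = 0 ↔ b 0 = 0 ∧ b 1 = 0 ∧ b 2 = 0 ∧ b 3 = 0 := by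
    simp [funext_iff, Fin.forall_fin_succ]
  simp only [Phase, Fin.isValue, Fin.reduceEq, or_true, ↓reduceIte, Pi.add_apply, ne_eq,
    not_false_eq_true, Pi.single_eq_of_ne, add_zero, Pi.single_eq_same, h_zero]
  constructor
  · rintro ⟨⟨h₁, h₂, h₃⟩, rfl⟩
    grind
  · grind

lemma isRule_start (k : Fin n) :
    IsRule k.succ (call k 0 (vS false k.castSucc)) (.single (vS false k.succ) 1) :=
  (isCall_start k 0).isRule_control (.inl rfl) fun b v => by
    simp [phase_start_iff, en_succ]

lemma isRule_finish (k : Fin n) :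
    IsRule k.succ (call k 3 (vS false k.castSucc)) (.single (vF false k.succ) 1) :=
  (isCall_start k 3).isRule_control (.inr rfl) fun b v => by
    simp [phase_finish_iff]

lemma phase_transfer_iff {E : ℕ} {b : Fin 4 → ℕ} {v : ℕ} :
    Phase 1 E (b + Pi.single 1 1) v ↔ ∃ v', Phase 1 E (b + Pi.single 2 1) v' ∧ v = v' + 1 := by
  simp only [Phase, Fin.isValue, one_ne_zero, Fin.reduceEq, or_self, ↓reduceIte, Pi.add_apply,
    Pi.single_eq_same, ne_eq, not_false_eq_true, Pi.single_eq_of_ne, add_zero, zero_ne_one]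
  constructor
  · rintro ⟨⟨h₁, h₂⟩, rfl⟩
    exact ⟨E * b 0 + b 1, ⟨⟨by omega, h₂⟩, rfl⟩, rfl⟩
  · rintro ⟨_, ⟨⟨h₁, h₂⟩, rfl⟩, rfl⟩
    exact ⟨⟨by omega, h₂⟩, rfl⟩

lemma isRule_transfer (k : Fin n) (i : Fin 4) : IsRule k.succ
    (.single (vQ false 1 k.succ) 1 + .single (vB false 2 k.castSucc) 1 +
      .single (vB false i k.succ) 1 + .single (vC false i k.succ) 1 +
      .single (vF false k.castSucc) 1)
    (.single (vQ false 1 k.succ) 1 + .single (vB false 1 k.castSucc) 1 +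
      .single (vC false i k.succ) 1 + .single (vF false k.castSucc) 1) := by
  have h_le := Fin.castSucc_lt_succ (i := k) |>.le
  have h_ne := Fin.castSucc_lt_succ (i := k) |>.ne
  refine ⟨⟨by simp [machine, h_le], k.castSucc, h_le, by simp⟩,
    ⟨by simp [machine, h_le], k.castSucc, h_le, by simp⟩, fun w j a => ?_⟩
  rw [IsInstruction.valid_add_iff (p := 1) (l := _ + _),
    IsInstruction.valid_add_iff (p := 1) (l := _ + _)]
  rotate_left
  · exact ⟨by simp, by simp, by simp [h_ne], by simp [low_add, low_single, h_le]⟩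
  · exact ⟨by simp, by simp, by simp [h_ne], by simp [low_add, low_single, h_le]⟩
  simp only [Fin.isValue, selectors_add, selectors_single, add_zero, h_ne.symm, ↓reduceIte,
    zero_add, add_single_one_eq_single_one, counters_add, counters_single, Finsupp.coe_add,
    Pi.add_apply, ne_eq, reduceCtorEq, not_false_eq_true, Finsupp.single_eq_of_ne, zero_mul,
    Pi.single_zero, h_ne, phase_transfer_iff]
  have h_owed (v : ℕ) : counters w k.succ + Pi.single i 1 + Pi.single i v =
      counters w k.succ + Pi.single i (v + 1) := by
    rw [add_assoc, ← Pi.single_add, add_comm 1]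
  constructor
  · rintro ⟨h₁, h₂, h₃, h₄, h₅, ⟨h₆, rfl⟩, v, h_phase, rfl⟩
    exact ⟨h₁, h₂, h₃, h₄, h₅, ⟨h₆, rfl⟩, v + 1, ⟨v, h_phase, rfl⟩, h_owed v⟩
  · rintro ⟨h₁, h₂, h₃, h₄, h₅, ⟨h₆, rfl⟩, _, ⟨v, h_phase, rfl⟩, rfl⟩
    exact ⟨h₁, h₂, h₃, h₄, h₅, ⟨h₆, rfl⟩, v, h_phase, (h_owed v).symm⟩

lemma isRule_base (i : Fin 4) : IsRule (0 : Fin (n + 1))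
    (.single (vB false i 0) 1 + .single (vB false i 0) 1 + .single (vC false i 0) 1 +
      .single (vF false 0) 1)
    (.single (vC false i 0) 1 + .single (vS false 0) 1) := by
  refine ⟨⟨by simp [machine], 0, le_rfl, by simp⟩, ⟨by simp [machine], 0, le_rfl, by simp⟩,
    fun w j a => ?_⟩
  rw [valid_iff_boundary (by simp), valid_iff_boundary (by simp)]
  simp only [selectors_add, selectors_single, add_zero, ↓reduceIte, zero_add,
    add_single_one_eq_single_one, control_add, control_single, low_add,
    low_single, le_refl, and_true, counters_add, counters_single]
  refine and_congr_right fun ⟨_, hij⟩ => and_congr_right fun h_ctrl => and_congr_right fun _ => ?_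
  obtain rfl := hij
  have h_zero : w (vS false 0) = 0 := (add_eq_zero.1 (add_eq_right.1 h_ctrl)).1
  rw [← Pi.single_add]
  simp [h_zero, en]

end Rules

section Generators

variable {n : ℕ} {f : MPoly n}

/-- The barred variables and `s`, which occur only once the counter has reached `e(n)`. -/
def secondPhase (n : ℕ) : Set (MVar n) :=
  {y | match y with
    | vs => True
    | vS bar _ | vF bar _ | vC bar _ _ | vB bar _ _ | vQ bar _ _ => bar = true
    | vl | vc | vcb | vb | vbb => False}

lemma exists_isRule_of_mem_PP (hf : f ∈ PP n false) :
    ∃ m l r, f = monomial l 1 - monomial r 1 ∧ IsRule m l r := by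
  have h_mon (y : MVar n) : (monomial (.single y 1) 1 : MPoly n) = X y := rfl
  have h_rule {m : Fin (n + 1)} {l r : Mon (MVar n)} (h : IsRule m l r)
      (hf : f = monomial l 1 - monomial r 1) :
      ∃ m l r, f = monomial l 1 - monomial r 1 ∧ IsRule m l r := ⟨m, l, r, hf, h⟩
  rcases hf with ⟨i, rfl⟩ | hf
  · refine h_rule (isRule_base i) ?_
    simp only [CharTwo.sub_eq_add, monomial_add_single, h_mon]
    ring
  obtain ⟨k, hk⟩ := Set.mem_iUnion.1 hf
  rcases hk with (rfl | rfl | rfl | rfl | rfl | rfl) | ⟨i, rfl⟩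
  on_goal 1 => refine h_rule (isRule_start k) ?_
  on_goal 2 => refine h_rule (isRule_enter k) ?_
  on_goal 3 => refine h_rule (isRule_turn k) ?_
  on_goal 4 => refine h_rule (isRule_loop k) ?_
  on_goal 5 => refine h_rule (isRule_leave k) ?_
  on_goal 6 => refine h_rule (isRule_finish k) ?_
  on_goal 7 => refine h_rule (isRule_transfer k i) ?_
  all_goals
    simp only [call, CharTwo.sub_eq_add, monomial_add_single, monomial_single_add, h_mon]
    ring

lemma exists_not_vanishesOn_of_mem_PP (hf : f ∈ PP n true) :
    ∃ l r, f = monomial l 1 - monomial r 1 ∧ ¬ VanishesOn (secondPhase n) l ∧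
      ¬ VanishesOn (secondPhase n) r := by
  rcases hf with ⟨i, rfl⟩ | hf
  · exact ⟨_, _, by simp only [X, sq, monomial_mul, mul_one, CharTwo.sub_eq_add]; rfl,
      by simp [secondPhase], by simp [secondPhase]⟩
  obtain ⟨k, hk⟩ := Set.mem_iUnion.1 hf
  rcases hk with (rfl | rfl | rfl | rfl | rfl | rfl) | ⟨i, rfl⟩ <;>
    exact ⟨_, _, by simp only [X, monomial_mul, mul_one, CharTwo.sub_eq_add]; rfl,
      by simp [secondPhase], by simp [secondPhase]⟩

lemma mem_span_X_of_mem_FF (hf : f ∈ FF n) :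
    f ∈ Ideal.span (X '' ({vc, vcb}ᶜ : Set (MVar n))) := by
  have h_mk (y : MVar n) (hy : y ∈ ({vc, vcb}ᶜ : Set (MVar n))) :
      Ideal.Quotient.mk (Ideal.span (X '' ({vc, vcb}ᶜ : Set (MVar n)))) (X y : MPoly n) = 0 :=
    Ideal.Quotient.eq_zero_iff_mem.2 (Ideal.subset_span ⟨y, hy, rfl⟩)
  have h_PP {bar : Bool} (hf : f ∈ PP n bar) :
      Ideal.Quotient.mk (Ideal.span (X '' ({vc, vcb}ᶜ : Set (MVar n)))) f = 0 := by
    rcases hf with ⟨i, rfl⟩ | hf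
    · simp [h_mk]
    obtain ⟨k, hk⟩ := Set.mem_iUnion.1 hf
    rcases hk with (rfl | rfl | rfl | rfl | rfl | rfl) | ⟨i, rfl⟩ <;> simp [h_mk]
  refine Ideal.Quotient.eq_zero_iff_mem.1 ?_
  rcases hf with (hf | hf) | rfl | rfl | rfl | rfl | rfl | rfl | rfl
  · exact h_PP hf
  · exact h_PP hf
  all_goals simp [h_mk]

end Generators

section Orbit

variable {n a b : ℕ} {t w l r : Mon (MVar n)}

/-- The part of `t` in the unbarred variables of all levels is `b_{4n}^N`. -/
def IsHalted (t : Mon (MVar n)) (N : ℕ) : Prop :=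
  selectors t (Fin.last n) = 0 ∧ counters t (Fin.last n) = Pi.single 3 N ∧
    control t (Fin.last n) = 0 ∧ Low (Fin.last n) t

/-- A set of monomials that contains the congruence class of `ℓ c̄^a c^b` for `a + b < e(n)`. Its
elements arise by rewriting some letters `c`, `c̄` to `b_{4n} b`, `b_{4n} b̄`, and possibly `ℓ` to a
configuration in which the exponent of `b_{4n}` and the letters owed to it add up to the number of
the rewritten letters. -/
def orbit (n a b : ℕ) : Set (Mon (MVar n)) :=
  {t | VanishesOn (secondPhase n) t ∧ t vc + t vb = b ∧ t vcb + t vbb = a ∧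
    (t vl = 1 ∧ IsHalted t (t vb + t vbb) ∨
      t vl = 0 ∧ Valid t (Fin.last n) 3 (Pi.single 3 (t vb + t vbb)))}

lemma not_isHalted_add {m : Fin (n + 1)} (hl : IsMachineWord m l) {N : ℕ} :
    ¬ IsHalted (w + l) N := by
  rintro ⟨-, -, h_ctrl, h_low⟩
  obtain ⟨i, -, hi⟩ := hl.exists_control_pos
  have h_zero : control (w + l) i = 0 := by
    obtain rfl | hi := (Fin.le_last i).eq_or_lt
    · exact h_ctrl
    · exact (h_low.1 i hi).1
  rw [control_add] at h_zero
  omega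

lemma IsMachineWord.add_mem_orbit_iff {m : Fin (n + 1)} (hl : IsMachineWord m l) :
    w + l ∈ orbit n a b ↔ VanishesOn (secondPhase n) w ∧ w vc + w vb = b ∧ w vcb + w vbb = a ∧
      w vl = 0 ∧ Valid (w + l) (Fin.last n) 3 (Pi.single 3 (w vb + w vbb)) := by
  have h_zero (y : MVar n) (hy : y ∉ machine m) : l y = 0 := hl.vanishesOn y hy
  have h_second : VanishesOn (secondPhase n) l := by
    rintro y hy
    refine h_zero y fun ⟨i, _, h⟩ => ?_
    rcases h with rfl | rfl | ⟨j, rfl | rfl | rfl⟩ <;> simp [secondPhase] at hy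
  have h_special : l vc = 0 ∧ l vb = 0 ∧ l vcb = 0 ∧ l vbb = 0 ∧ l vl = 0 := by
    refine ⟨h_zero _ ?_, h_zero _ ?_, h_zero _ ?_, h_zero _ ?_, h_zero _ ?_⟩ <;> simp [machine]
  simp only [orbit, Set.mem_ofPred_eq, vanishesOn_add, h_second, and_true, Finsupp.add_apply,
    h_special, add_zero, not_isHalted_add hl, and_false, false_or]

lemma IsRule.add_mem_orbit_iff {m : Fin (n + 1)} (h : IsRule m l r) :
    w + l ∈ orbit n a b ↔ w + r ∈ orbit n a b := by
  rw [h.left.add_mem_orbit_iff, h.right.add_mem_orbit_iff, h.valid_iff_of_le (Fin.le_last m)]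

lemma not_mem_orbit_of_vC_vS (hab : a + b < en n) :
    w + .single (vC false 3 (Fin.last n)) 1 + .single (vS false (Fin.last n)) 1 ∉ orbit n a b := by
  intro h
  rw [IsMachineWord.add_mem_orbit_iff (m := Fin.last n)
    ⟨by simp [machine], _, le_rfl, by simp⟩] at h
  obtain ⟨-, h_b, h_a, -, h_valid⟩ := h
  rw [valid_add_control_iff (.inl rfl)] at h_valid
  have h_count := congrFun h_valid.2.2.2 3
  simp only [Fin.isValue, Finsupp.coe_add, Pi.add_apply, ne_eq, reduceCtorEq, not_false_eq_true,
    Finsupp.single_eq_of_ne, add_zero, Pi.single_eq_same, counters_add, counters_single,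
    Finsupp.single_eq_same, Fin.val_last, one_mul] at h_count h_b h_a
  omega

lemma add_vC_vF_mem_orbit_iff :
    w + (.single (vC false 3 (Fin.last n)) 1 + .single (vF false (Fin.last n)) 1) ∈ orbit n a b ↔
      w + .single vl 1 ∈ orbit n a b := by
  rw [IsMachineWord.add_mem_orbit_iff (m := Fin.last n) ⟨by simp [machine], _, le_rfl, by simp⟩,
    ← add_assoc, valid_add_control_iff (.inr rfl)]
  simp only [secondPhase, Fin.isValue, selectors_add, selectors_single, ↓reduceIte, add_eq_right,
    control_add, control_single, add_zero, low_add, low_single, le_refl, and_true, counters_add,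
    counters_single, ne_eq, reduceCtorEq, not_false_eq_true, Finsupp.single_eq_of_ne, Fin.val_last,
    zero_mul, Pi.single_zero, orbit, IsHalted, Set.mem_ofPred_eq, vanishesOn_add, vanishesOn_single,
    Finsupp.coe_add, Pi.add_apply, Finsupp.single_eq_same, Nat.add_eq_zero_iff,
    one_ne_zero, and_false, false_and, or_false, and_congr_right_iff]
  tauto

lemma add_vB_vl_mem_orbit_iff {y z : MVar n} (hyz : y = vb ∧ z = vc ∨ y = vbb ∧ z = vcb) :
    w + (.single (vB false 3 (Fin.last n)) 1 + .single vl 1 + .single y 1) ∈ orbit n a b ↔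
      w + (.single vl 1 + .single z 1) ∈ orbit n a b := by
  have h_add {N : ℕ} : counters w (Fin.last n) + Pi.single 3 1 = Pi.single 3 (N + 1) ↔
      counters w (Fin.last n) = Pi.single 3 N := by
    rw [Pi.single_add, add_left_inj]
  rcases hyz with ⟨rfl, rfl⟩ | ⟨rfl, rfl⟩ <;>
    simp [orbit, IsHalted, low_add, low_single, secondPhase, h_add, ← add_assoc,
      add_right_comm _ 1]

lemma isSaturated_orbit (hab : a + b < en n) : IsSaturated (FF n) (orbit n a b) := by
  have h_not_mem {w l : Mon (MVar n)} (hl : ¬ VanishesOn (secondPhase n) l) :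
      w + l ∉ orbit n a b := fun h => hl (vanishesOn_add.1 h.1).2
  have h_vC_vS (w : Mon (MVar n)) := not_mem_orbit_of_vC_vS (w := w) hab
  rintro f ((hf | hf) | hf)
  · obtain ⟨m, l, r, rfl, h⟩ := exists_isRule_of_mem_PP hf
    exact ⟨l, r, rfl, fun w => h.add_mem_orbit_iff⟩
  · obtain ⟨l, r, rfl, hl, hr⟩ := exists_not_vanishesOn_of_mem_PP hf
    exact ⟨l, r, rfl, fun w => iff_of_false (h_not_mem hl) (h_not_mem hr)⟩
  have h_mon (y : MVar n) : (monomial (.single y 1) 1 : MPoly n) = X y := rfl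
  rcases hf with rfl | rfl | rfl | rfl | rfl | rfl | rfl
  · refine ⟨_, _, ?_, fun w => add_vB_vl_mem_orbit_iff (.inl ⟨rfl, rfl⟩)⟩
    simp only [CharTwo.sub_eq_add, monomial_add_single, h_mon, pow_one]
  · refine ⟨_, _, ?_, fun w => add_vB_vl_mem_orbit_iff (.inr ⟨rfl, rfl⟩)⟩
    simp only [CharTwo.sub_eq_add, monomial_add_single, h_mon, pow_one]
  · refine ⟨_, _, ?_, fun w => add_vC_vF_mem_orbit_iff⟩
    simp only [CharTwo.sub_eq_add, monomial_add_single, h_mon, pow_one]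
  · refine ⟨_, _, by simp only [X, monomial_mul, mul_one, CharTwo.sub_eq_add]; rfl, fun w =>
      iff_of_false (h_not_mem (by simp [secondPhase])) ?_⟩
    simpa [add_assoc] using h_vC_vS w
  · refine ⟨_, _, by simp only [X, monomial_mul, mul_one, CharTwo.sub_eq_add]; rfl, fun w =>
      iff_of_false (h_not_mem (by simp [secondPhase])) ?_⟩
    simpa [add_assoc, add_comm, add_left_comm] using h_vC_vS (w + .single vb 1)
  · refine ⟨_, _, by simp only [X, monomial_mul, mul_one, CharTwo.sub_eq_add]; rfl, fun w =>
      iff_of_false (h_not_mem (by simp [secondPhase])) ?_⟩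
    simpa [add_assoc, add_comm, add_left_comm] using h_vC_vS (w + .single vbb 1)
  · exact ⟨_, _, by simp only [X, monomial_mul, mul_one, CharTwo.sub_eq_add]; rfl, fun w =>
      iff_of_false (h_not_mem (by simp [secondPhase])) (h_not_mem (by simp [secondPhase]))⟩

end Orbit

section Degree

lemma mdeg_eq_degree {σ : Type*} (t : Mon σ) : mdeg t = t.degree := rfl

lemma sum_le_mdeg {σ : Type*} (t : Mon σ) (s : Finset σ) : ∑ y ∈ s, t y ≤ mdeg t :=
  Finset.sum_le_sum_of_ne_zero fun _ _ hy => Finsupp.mem_support_iff.2 hy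

variable {n a b : ℕ} {t : Mon (MVar n)}

lemma mdeg_dmon (j a b : ℕ) : mdeg (dmon n j a b) = j + a + b := by
  simp [mdeg_eq_degree, dmon]

lemma eq_dmon_iff {j : ℕ} : t = dmon n j a b ↔
    t vl = j ∧ t vcb = a ∧ t vc = b ∧ ∀ y, y ≠ vl → y ≠ vcb → y ≠ vc → t y = 0 := by
  constructor
  · rintro rfl
    refine ⟨by simp [dmon], by simp [dmon], by simp [dmon], fun y h₁ h₂ h₃ => ?_⟩
    simp [dmon, h₁, h₂, h₃]
  · rintro ⟨rfl, rfl, rfl, h⟩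
    ext y
    by_cases h₁ : y = vl
    · simp [h₁, dmon]
    by_cases h₂ : y = vcb
    · simp [h₂, dmon]
    by_cases h₃ : y = vc
    · simp [h₃, dmon]
    simp [h y h₁ h₂ h₃, dmon, h₁, h₂, h₃]

lemma eq_dmon_of_mdeg_le (h_vl : t vl = 1) (h_vcb : t vcb = a) (h_vc : t vc = b)
    (h_deg : mdeg t ≤ 1 + a + b) : t = dmon n 1 a b := by
  refine eq_dmon_iff.2 ⟨h_vl, h_vcb, h_vc, fun y h₁ h₂ h₃ => ?_⟩
  have h_sum := sum_le_mdeg t {y, vl, vcb, vc}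
  rw [Finset.sum_insert (by simp [h₁, h₂, h₃])] at h_sum
  simp only [Finset.mem_insert, reduceCtorEq, Finset.mem_singleton, or_self,
    not_false_eq_true, Finset.sum_insert, Finset.sum_singleton] at h_sum
  omega

lemma Valid.selectors_eq {k : Fin (n + 1)} {j : Fin 4} {v : Fin 4 → ℕ} (h : Valid t k j v) :
    selectors t k = Pi.single j 1 := by
  cases h <;> assumption

lemma Valid.exists_pos {k : Fin (n + 1)} {j : Fin 4} {v : Fin 4 → ℕ} (h : Valid t k j v) :
    ∃ y ∈ machine k, y ≠ vC false j k ∧ 0 < t y := by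
  cases h with
  | boundary _ h_ctrl _ =>
    obtain h_pos | h_pos : 0 < t (vS false k) ∨ 0 < t (vF false k) := by
      unfold control at h_ctrl
      omega
    · exact ⟨vS false k, by simp [machine], by simp, h_pos⟩
    · exact ⟨vF false k, by simp [machine], by simp, h_pos⟩
  | @running k _ p _ _ _ _ h_prog _ _ =>
    have h_one : t (vQ false p k.succ) = 1 := by simpa [program] using congrFun h_prog p
    exact ⟨vQ false p k.succ, by simp [machine], by simp, by omega⟩

lemma eq_dmon_of_mem_orbit (ht : t ∈ orbit n a b) (h_deg : mdeg t ≤ 1 + a + b) :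
    t = dmon n 1 a b := by
  obtain ⟨-, h_b, h_a, ⟨h_vl, -, h_cnt, -⟩ | ⟨-, h_valid⟩⟩ := ht
  · have h_vB : t (vB false 3 (Fin.last n)) = t vb + t vbb := by
      simpa [counters] using congrFun h_cnt 3
    have h_sum := sum_le_mdeg t {vl, vcb, vc, vb, vbb, vB false 3 (Fin.last n)}
    simp only [Fin.isValue, Finset.mem_insert, reduceCtorEq, Finset.mem_singleton, or_self,
      not_false_eq_true, Finset.sum_insert, Finset.sum_singleton] at h_sum
    exact eq_dmon_of_mdeg_le h_vl (by omega) (by omega) h_deg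
  · have h_vC : t (vC false 3 (Fin.last n)) = 1 := by
      simpa [selectors] using congrFun h_valid.selectors_eq 3
    obtain ⟨y, hy, hy_ne, h_pos⟩ := h_valid.exists_pos
    have h_sum := sum_le_mdeg t {y, vcb, vc, vb, vbb, vC false 3 (Fin.last n)}
    rw [Finset.sum_insert] at h_sum
    · simp only [Fin.isValue, Finset.mem_insert, reduceCtorEq, Finset.mem_singleton, or_self,
        not_false_eq_true, Finset.sum_insert, Finset.sum_singleton] at h_sum
      omega
    · have h_special : vcb ∉ machine (Fin.last n) ∧ vc ∉ machine (Fin.last n) ∧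
          vb ∉ machine (Fin.last n) ∧ vbb ∉ machine (Fin.last n) := by simp [machine]
      grind

end Degree

section Head

variable {n a b a' b' : ℕ}

lemma mdeg_le_of_degLexLe {t u : Mon (MVar n)} (h : degLexLe n t u) : mdeg t ≤ mdeg u :=
  h.elim le_of_lt fun h => h.1.le

lemma dmon_one_mem_orbit (a b : ℕ) : dmon n 1 a b ∈ orbit n a b := by
  have h_halted : IsHalted (dmon n 1 a b) 0 := by
    simp [IsHalted, Low, dmon, selectors, counters, control, program, funext_iff]
  have h_second : VanishesOn (secondPhase n) (dmon n 1 a b) := by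
    rintro (_ | _) hy <;> simp_all [dmon, secondPhase]
  refine ⟨h_second, ?_, ?_, .inl ⟨?_, ?_⟩⟩
  · simp [dmon]
  · simp [dmon]
  · simp [dmon]
  · simpa [dmon] using h_halted

lemma not_isHT_dmon_one (hab : a + b < en n) {p : MPoly n} (hp : p ∈ Ideal.span (FF n)) :
    ¬ IsHT (degLexLe n) p (dmon n 1 a b) :=
  (isSaturated_orbit hab).not_isHT (dmon_one_mem_orbit a b)
    (fun _ hu h_le =>
      eq_dmon_of_mem_orbit hu ((mdeg_le_of_degLexLe h_le).trans_eq (mdeg_dmon 1 a b))) hp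

lemma dmon_zero_notMem_support {p : MPoly n} (hp : p ∈ Ideal.span (FF n)) :
    dmon n 0 a b ∉ p.support := by
  intro h
  obtain ⟨y, hy, hy0⟩ := mem_ideal_span_X_image.1
    (Ideal.span_le.2 (fun _ => mem_span_X_of_mem_FF) hp) _ h
  obtain ⟨h_vl, -, -, h_zero⟩ := eq_dmon_iff.1 (rfl : dmon n 0 a b = _)
  simp only [Set.mem_compl_iff, Set.mem_insert_iff, Set.mem_singleton_iff, not_or] at hy
  by_cases hyl : y = vl
  · exact hy0 (hyl ▸ h_vl)
  · exact hy0 (h_zero y hyl hy.2 hy.1)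

lemma isHT_monomial_dmon_add_X (hab : 0 < a + b) :
    IsHT (degLexLe n) (monomial (dmon n 1 a b) 1 + X vs) (dmon n 1 a b) := by
  have h_lt : mdeg (Finsupp.single vs 1 : Mon (MVar n)) < mdeg (dmon n 1 a b) := by
    rw [mdeg_dmon]
    simp only [mdeg_eq_degree, Finsupp.degree_single]
    omega
  have h_ne : (Finsupp.single vs 1 : Mon (MVar n)) ≠ dmon n 1 a b := by
    intro h
    exact h_lt.ne (congrArg mdeg h)
  constructor
  · simp [X, coeff_monomial, h_ne]
  · intro u hu
    obtain hu | hu := Finset.mem_union.1 (support_add hu)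
    · rw [Finset.mem_singleton.1 (support_monomial_subset hu)]
      exact .inr ⟨rfl, .inl rfl⟩
    · rw [Finset.mem_singleton.1 (support_monomial_subset hu)]
      exact .inl h_lt

lemma eq_dmon_of_isHT_of_le {p : MPoly n} (hp : p ∈ Ideal.span (FF n)) {u : Mon (MVar n)}
    (hu : IsHT (degLexLe n) p u) (hab : a + b = en n) (h_le : u ≤ dmon n 1 a b) :
    u = dmon n 1 a b := by
  obtain ⟨h_vl, h_vcb, h_vc, h_zero⟩ := eq_dmon_iff.1 (rfl : dmon n 1 a b = _)
  have h_u : u = dmon n (u vl) (u vcb) (u vc) := eq_dmon_iff.2 ⟨rfl, rfl, rfl,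
    fun y h₁ h₂ h₃ => Nat.eq_zero_of_le_zero ((h_le y).trans_eq (h_zero y h₁ h₂ h₃))⟩
  have h_vl_one : u vl = 1 := by
    by_contra h
    have := h_le vl
    rw [show u vl = 0 by omega] at h_u
    exact dmon_zero_notMem_support hp (h_u ▸ hu.1)
  have h_not_lt : ¬ u vcb + u vc < en n := fun h_lt => by
    rw [h_vl_one] at h_u
    exact not_isHT_dmon_one h_lt hp (h_u ▸ hu)
  have := h_le vcb
  have := h_le vc
  rw [h_u, h_vl_one, show u vcb = a by omega, show u vc = b by omega]

lemma exists_isHT_dmon {G : Finset (MPoly n)} (hG : IsGB (degLexLe n) G (Ideal.span (FF n)))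
    (hab : a + b = en n) : ∃ g ∈ G, IsHT (degLexLe n) g (dmon n 1 a b) := by
  obtain ⟨g, hg, u, h_le, hu⟩ := hG.exists_isHT_le (monomial_dmon_add_X_mem hab)
    (isHT_monomial_dmon_add_X (hab ▸ en_pos n))
  exact ⟨g, hg, eq_dmon_of_isHT_of_le (hG.1 hg) hu hab h_le ▸ hu⟩

lemma le_of_degLexLe_dmon (hab : a + b = a' + b')
    (h : degLexLe n (dmon n 1 a b) (dmon n 1 a' b')) : a ≤ a' := by
  obtain ⟨h_vl, h_vcb, h_vc, -⟩ := eq_dmon_iff.1 (rfl : dmon n 1 a b = _)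
  obtain ⟨h_vl', h_vcb', h_vc', h_zero'⟩ := eq_dmon_iff.1 (rfl : dmon n 1 a' b' = _)
  rcases h with h | ⟨-, h_eq | ⟨y, h_lt, h_above⟩⟩
  · rw [mdeg_dmon, mdeg_dmon] at h
    omega
  · rw [← h_vcb, h_eq, h_vcb']
  · by_cases h₁ : y = vl
    · subst h₁
      omega
    by_cases h₂ : y = vcb
    · subst h₂
      omega
    by_cases h₃ : y = vc
    · subst h₃
      rw [← h_vcb, h_above vcb (by simp [vrank]), h_vcb']
    · exact absurd h_lt (by simp [h_zero' y h₁ h₂ h₃])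

lemma eq_of_isHT_dmon {p : MPoly n} (hab : a + b = a' + b')
    (h : IsHT (degLexLe n) p (dmon n 1 a b)) (h' : IsHT (degLexLe n) p (dmon n 1 a' b')) :
    a = a' :=
  (le_of_degLexLe_dmon hab (h'.2 _ h.1)).antisymm (le_of_degLexLe_dmon hab.symm (h.2 _ h'.1))

end Head

end CounterMachine

open CounterMachine

theorem stmt17_general (n : ℕ) (G : Finset (MPoly n))
    (hG : IsGB (degLexLe n) G (Ideal.span (FF n))) :
    en n < (G.filter fun p => en n < p.totalDegree).card := by
  have h_head (a : ℕ) (ha : a ∈ Finset.range (en n + 1)) :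
      ∃ g ∈ G, IsHT (degLexLe n) g (dmon n 1 a (en n - a)) :=
    exists_isHT_dmon hG (by rw [Finset.mem_range] at ha; omega)
  choose! g hgG hg using h_head
  rw [← Nat.succ_le_iff, Nat.succ_eq_add_one, ← Finset.card_range (en n + 1)]
  refine Finset.card_le_card_of_injOn g (fun a ha => ?_) fun a ha a' ha' h => ?_
  · have h_deg : mdeg (dmon n 1 a (en n - a)) ≤ (g a).totalDegree := le_totalDegree (hg a ha).1
    have := Finset.mem_range.1 ha
    rw [mdeg_dmon] at h_deg
    exact Finset.mem_filter.2 ⟨hgG a ha, by omega⟩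
  · have := Finset.mem_range.1 ha
    have := Finset.mem_range.1 ha'
    exact eq_of_isHT_dmon (by omega) (hg a ha) (h ▸ hg a' ha')

/-- Every reduced Gröbner basis `G` of `⟨𝓕⟩` with respect to the degree
lexicographic order `≼_deg` satisfies `|G| ≥ 2^(2^n)` and
`|{p ∈ G : deg p ≥ 2^(2^n)}| ≥ 2^(2^n)`. -/
theorem stmt17 (n : ℕ) (G : Finset (MPoly n))
    (hG : IsReducedGB (degLexLe n) G (Ideal.span (FF n))) :
    en n ≤ G.card ∧ en n ≤ (G.filter fun p => en n ≤ p.totalDegree).card := by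
  have h := (stmt17_general n G hG.1).le.trans
    (Finset.card_le_card (Finset.monotone_filter_right G fun p _ hp => hp.le))
  exact ⟨h.trans (Finset.card_filter_le _ _), h⟩
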